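/- Let p ≡ 1 (mod 4) be prime, let p divide n, let Q_p ⊆ {1, …, p−1} be the set of nonzero quadratic residues modulo p, and let a, b, c be integers coprime to p with Legendre symbols (a|p) = −(c|p). Let X = {((aq+b)·(n/p) + 1) mod n : q ∈ Q_p} ∪ {((cq−b)·(n/p) − 1) mod n : q ∈ Q_p}, and assume these p−1 elements of ℤ/nℤ are distinct. Then for every y ∈ ℤ/nℤ whose integer representative ỹ is divisible by p, one has σ_X(y) = (p−1)·cos(2πỹ/n); in particular σ_X(y) is a real number in the interval [1−p, p−1]. -/

import Mathlib

open Complex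

/-- `e(θ) = exp(2πiθ)`. -/
noncomputable def e2 (θ : ℝ) : ℂ := Complex.exp (2 * Real.pi * Complex.I * θ)

/-- The cyclic supercharacter attached to a subset `X` of `ℤ/nℤ`:
`σ_X(y) = Σ_{x ∈ X} e(xy/n)`. -/
noncomputable def superchar (n : ℕ) (X : Set (ZMod n)) (y : ZMod n) : ℂ :=
  ∑ᶠ x ∈ X, e2 (((x.val * y.val : ℕ) : ℝ) / (n : ℝ))

/-- The orbit `Ar = {ar : a ∈ A}` of `r` under a unit subgroup `A`. -/
def unitOrbit (n : ℕ) (A : Subgroup (ZMod n)ˣ) (r : ZMod n) : Set (ZMod n) :=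
  (fun a : (ZMod n)ˣ => (a : ZMod n) * r) '' (A : Set (ZMod n)ˣ)

/-!
Modulo `n`, the element `n / p` annihilates every multiple of `p`. Pairing with such a `y` therefore
sees only the shift `±1` in the elements `u * (n / p) ± 1` of `X`, so each summand of `σ_X(y)` is
`e(y / n)` or `e(-y / n)`. Since the `p - 1` elements are distinct and there are `(p - 1) / 2`
quadratic residues, the two values occur equally often and their sum is a multiple of the cosine.
-/

section Superchar

variable {n : ℕ} [NeZero n]

theorem e2_val_mul_val_div (x y : ZMod n) :
    e2 (((x.val * y.val : ℕ) : ℝ) / (n : ℝ)) = ZMod.stdAddChar (x * y) := by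
  have hxy : x * y = (((x.val * y.val : ℕ) : ℤ) : ZMod n) := by simp
  rw [hxy, ZMod.stdAddChar_coe, e2]
  push_cast
  ring_nf

theorem superchar_eq_finsum_stdAddChar (X : Set (ZMod n)) (y : ZMod n) :
    superchar n X y = ∑ᶠ x ∈ X, ZMod.stdAddChar (x * y) := by
  simp only [superchar, e2_val_mul_val_div]

theorem superchar_union {A B : Set (ZMod n)} (hAB : Disjoint A B) (y : ZMod n) :
    superchar n (A ∪ B) y = superchar n A y + superchar n B y :=
  finsum_mem_union hAB A.toFinite B.toFinite

theorem superchar_eq_ncard_mul_of_forall_mul_eq {X : Set (ZMod n)} {y z : ZMod n}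
    (hX : ∀ x ∈ X, x * y = z) :
    superchar n X y = X.ncard * ZMod.stdAddChar z := by
  calc superchar n X y
      = ∑ᶠ x ∈ X, ZMod.stdAddChar (x * y) := superchar_eq_finsum_stdAddChar X y
    _ = ∑ᶠ _x ∈ X, ZMod.stdAddChar z := finsum_mem_congr rfl fun x hx ↦ by rw [hX x hx]
    _ = X.ncard * ZMod.stdAddChar z := by
      rw [finsum_mem_eq_finite_toFinset_sum _ X.toFinite, Finset.sum_const,
        ← Set.ncard_eq_toFinset_card X X.toFinite, nsmul_eq_mul]

theorem re_stdAddChar (y : ZMod n) :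
    (ZMod.stdAddChar y : ℂ).re = Real.cos (2 * Real.pi * (y.val : ℝ) / (n : ℝ)) := by
  rw [ZMod.stdAddChar_apply, ZMod.toCircle_apply, ← Complex.exp_ofReal_mul_I_re]
  congr 2
  push_cast
  ring

theorem stdAddChar_add_stdAddChar_neg (y : ZMod n) :
    (ZMod.stdAddChar y + ZMod.stdAddChar (-y) : ℂ)
      = ((2 * Real.cos (2 * Real.pi * (y.val : ℝ) / (n : ℝ)) : ℝ) : ℂ) := by
  rw [AddChar.map_neg_eq_conj, Complex.add_conj, re_stdAddChar]

theorem superchar_union_eq_ncard_mul_cos {A B : Set (ZMod n)} {y : ZMod n}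
    (hAB : Disjoint A B) (hcard : A.ncard = B.ncard) (hA : ∀ x ∈ A, x * y = y)
    (hB : ∀ x ∈ B, x * y = -y) :
    superchar n (A ∪ B) y
      = (((A ∪ B).ncard * Real.cos (2 * Real.pi * (y.val : ℝ) / (n : ℝ)) : ℝ) : ℂ) := by
  rw [superchar_union hAB, superchar_eq_ncard_mul_of_forall_mul_eq hA,
    superchar_eq_ncard_mul_of_forall_mul_eq hB, ← hcard, ← mul_add,
    stdAddChar_add_stdAddChar_neg, Set.ncard_union_eq hAB, ← hcard]
  push_cast
  ring

theorem natCast_div_mul_eq_zero {d : ℕ} {y : ZMod n} (hd : d ∣ n) (hy : d ∣ y.val) :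
    ((n / d : ℕ) : ZMod n) * y = 0 := by
  obtain ⟨m, hm⟩ := hy
  rw [← ZMod.natCast_zmod_val y, hm, ← Nat.cast_mul, ← mul_assoc, Nat.div_mul_cancel hd,
    Nat.cast_mul, ZMod.natCast_self, zero_mul]

end Superchar

theorem ncard_eq_and_disjoint_of_add_le_ncard_union {α : Type*} {A B : Set α} {j k : ℕ}
    (hAfin : A.Finite) (hBfin : B.Finite) (hA : A.ncard ≤ j) (hB : B.ncard ≤ k)
    (hAB : j + k ≤ (A ∪ B).ncard) :
    A.ncard = j ∧ B.ncard = k ∧ Disjoint A B := by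
  have hle := Set.ncard_union_le A B
  exact ⟨by omega, by omega, (Set.ncard_union_eq_iff hAfin hBfin).1 (by omega)⟩

theorem modulus_ne_zero_of_two_lt_ncard {ι : Type*} {n d : ℕ} {Q : Set ι} {u v : ι → ZMod n}
    {X : Set (ZMod n)}
    (hX : X = (fun q ↦ u q * ((n / d : ℕ) : ZMod n) + 1) '' Q
        ∪ (fun q ↦ v q * ((n / d : ℕ) : ZMod n) - 1) '' Q)
    (hcard : 2 < X.ncard) :
    n ≠ 0 := by
  rintro rfl
  have hsub : X ⊆ {1, -1} := by
    rw [hX]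
    rintro _ (⟨q, -, rfl⟩ | ⟨q, -, rfl⟩) <;> simp
  have hpair : ({1, -1} : Set (ZMod 0)).ncard ≤ 2 := by
    simpa only [Set.ncard_singleton] using Set.ncard_insert_le (1 : ZMod 0) {-1}
  exact hcard.not_ge ((Set.ncard_le_ncard hsub (Set.toFinite _)).trans hpair)

/-- The set `Q_p` of nonzero quadratic residues modulo `p`, encoded by their representatives in
`{1, …, p - 1}`. -/
def quadraticResidues (p : ℕ) : Set ℕ :=
  {q : ℕ | 0 < q ∧ q < p ∧ ∃ t : ZMod p, t ^ 2 = (q : ZMod p)}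

theorem finite_quadraticResidues (p : ℕ) : (quadraticResidues p).Finite :=
  (Set.finite_Iio p).subset fun _ hq ↦ hq.2.1

theorem quadraticResidues_eq_image_val_range_powMonoidHom (p : ℕ) [hp : Fact p.Prime] :
    quadraticResidues p
      = (ZMod.val ∘ Units.val) ''
          ((powMonoidHom 2 : (ZMod p)ˣ →* (ZMod p)ˣ).range : Set (ZMod p)ˣ) := by
  ext q
  constructor
  · rintro ⟨hq0, hqp, t, ht⟩
    have hq : (q : ZMod p) ≠ 0 := by
      rw [Ne, ZMod.natCast_eq_zero_iff]
      exact Nat.not_dvd_of_pos_of_lt hq0 hqp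
    have ht0 : t ≠ 0 := by
      rintro rfl
      exact hq (ht.symm.trans (zero_pow two_ne_zero))
    refine ⟨Units.mk0 t ht0 ^ 2, ⟨Units.mk0 t ht0, rfl⟩, ?_⟩
    simp only [Function.comp_apply, Units.val_pow_eq_pow_val, Units.val_mk0, ht,
      ZMod.val_cast_of_lt hqp]
  · rintro ⟨_, ⟨t, rfl⟩, rfl⟩
    refine ⟨ZMod.val_pos.2 (Units.ne_zero _), ZMod.val_lt _, t, ?_⟩
    simp

theorem two_mul_ncard_quadraticResidues {p : ℕ} [hp : Fact p.Prime] (hp2 : p ≠ 2) :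
    2 * (quadraticResidues p).ncard = p - 1 := by
  have hdvd : 2 ∣ p - 1 := (hp.out.even_sub_one hp2).two_dvd
  rw [quadraticResidues_eq_image_val_range_powMonoidHom,
    Set.ncard_image_of_injective _ ((ZMod.val_injective p).comp Units.val_injective),
    ← Nat.card_coe_set_eq, SetLike.coe_sort_coe, IsCyclic.card_powMonoidHom_range,
    Nat.card_eq_fintype_card, ZMod.card_units, Nat.gcd_eq_right hdvd, Nat.mul_div_cancel' hdvd]

theorem stmt14_general {ι : Type*} {n d : ℕ} [NeZero n] (hd : d ∣ n) {Q : Set ι} (hQ : Q.Finite)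
    (u v : ι → ZMod n) {X : Set (ZMod n)}
    (hX : X = (fun q ↦ u q * ((n / d : ℕ) : ZMod n) + 1) '' Q
        ∪ (fun q ↦ v q * ((n / d : ℕ) : ZMod n) - 1) '' Q)
    (hcard : X.ncard = 2 * Q.ncard) {y : ZMod n} (hy : d ∣ y.val) :
    superchar n X y
      = ((X.ncard * Real.cos (2 * Real.pi * (y.val : ℝ) / (n : ℝ)) : ℝ) : ℂ)
    ∧ (superchar n X y).im = 0
    ∧ -(X.ncard : ℝ) ≤ (superchar n X y).re
    ∧ (superchar n X y).re ≤ X.ncard := by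
  have hzero := natCast_div_mul_eq_zero hd hy
  have hcos : superchar n X y
      = ((X.ncard * Real.cos (2 * Real.pi * (y.val : ℝ) / (n : ℝ)) : ℝ) : ℂ) := by
    obtain ⟨hA, hB, hdisj⟩ := ncard_eq_and_disjoint_of_add_le_ncard_union
      (hQ.image _) (hQ.image _) (Set.ncard_image_le hQ) (Set.ncard_image_le hQ)
      ((two_mul _).symm.trans (hcard.symm.trans (congrArg Set.ncard hX))).le
    rw [hX]
    refine superchar_union_eq_ncard_mul_cos hdisj (hA.trans hB.symm) ?_ ?_
    · rintro _ ⟨q, -, rfl⟩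
      rw [add_mul, mul_assoc, hzero, mul_zero, zero_add, one_mul]
    · rintro _ ⟨q, -, rfl⟩
      rw [sub_mul, mul_assoc, hzero, mul_zero, zero_sub, one_mul]
  have hbound : |(superchar n X y).re| ≤ X.ncard := by
    rw [hcos, Complex.ofReal_re, abs_mul, Nat.abs_cast]
    exact mul_le_of_le_one_right (Nat.cast_nonneg _) (Real.abs_cos_le_one _)
  exact ⟨hcos, by rw [hcos, Complex.ofReal_im], abs_le.1 hbound⟩

theorem stmt14 (n p : ℕ) [hp : Fact p.Prime] (hp4 : p % 4 = 1) (hpn : p ∣ n)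
    (Qp : Set ℕ) (hQp : Qp = {q : ℕ | 0 < q ∧ q < p ∧ ∃ t : ZMod p, t ^ 2 = (q : ZMod p)})
    (a b c : ℤ) (hap : ¬ (p : ℤ) ∣ a) (hbp : ¬ (p : ℤ) ∣ b) (hcp : ¬ (p : ℤ) ∣ c)
    (hleg : legendreSym p a = - legendreSym p c)
    (X : Set (ZMod n))
    (hX : X = (fun q : ℕ => ((a * q + b : ℤ) : ZMod n) * ((n / p : ℕ) : ZMod n) + 1) '' Qp
        ∪ (fun q : ℕ => ((c * q - b : ℤ) : ZMod n) * ((n / p : ℕ) : ZMod n) - 1) '' Qp)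
    (hdist : X.ncard = p - 1)
    (y : ZMod n) (hy : p ∣ y.val) :
    superchar n X y
      = ((((p : ℝ) - 1) * Real.cos (2 * Real.pi * (y.val : ℝ) / (n : ℝ)) : ℝ) : ℂ)
    ∧ (superchar n X y).im = 0
    ∧ 1 - (p : ℝ) ≤ (superchar n X y).re
    ∧ (superchar n X y).re ≤ (p : ℝ) - 1 := by
  have hres : 2 * Qp.ncard = p - 1 := hQp ▸ two_mul_ncard_quadraticResidues (by omega)
  have hp2 := hp.out.two_le
  have : NeZero n := ⟨modulus_ne_zero_of_two_lt_ncard hX (by omega)⟩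
  simpa only [hdist, Nat.cast_pred hp.out.pos, neg_sub] using
    stmt14_general hpn (hQp ▸ finite_quadraticResidues p) _ _ hX (hdist.trans hres.symm) hy
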